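/- arXiv:1002.3797 — 6 statements merged into one kernel-verified Lean document; each statement's English description precedes it below -/
import Mathlib

section
/- Let p ≥ 2 and let ℙ ⊆ 𝕃(2,3,p) be the persistent subset ℤx₃ ∪ (x₂ + ℤx₃). For every integer n, the element n·ω belongs to ℙ if and only if n ≡ 0 or n ≡ 2 modulo 6. (Thus along each ω-orbit the membership in ℙ follows the 6-periodic pattern + − + − − −.) -/
/-- The relations subgroup of `ℤ³` defining `𝕃(2,3,p)`: generated by
`(2,-3,0)` and `(0,3,-p)`. -/
def Lrel (p : ℕ) : AddSubgroup (ℤ × ℤ × ℤ) :=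
  AddSubgroup.closure {(2, -3, 0), (0, 3, -(p : ℤ))}

/-- The abelian group `𝕃(2,3,p)` with generators `x₁, x₂, x₃` and relations
`2x₁ = 3x₂ = p x₃`. -/
abbrev Lgrp (p : ℕ) := (ℤ × ℤ × ℤ) ⧸ Lrel p

/-- The generator `x₁` of `𝕃(2,3,p)`. -/
def lx1 (p : ℕ) : Lgrp p := QuotientAddGroup.mk (1, 0, 0)

/-- The generator `x₂` of `𝕃(2,3,p)`. -/
def lx2 (p : ℕ) : Lgrp p := QuotientAddGroup.mk (0, 1, 0)

/-- The generator `x₃` of `𝕃(2,3,p)`. -/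
def lx3 (p : ℕ) : Lgrp p := QuotientAddGroup.mk (0, 0, 1)

/-- The canonical element `c = p x₃`. -/
def lc (p : ℕ) : Lgrp p := (p : ℤ) • lx3 p

/-- The dualizing element `ω = c - x₁ - x₂ - x₃`. -/
def lw (p : ℕ) : Lgrp p := lc p - lx1 p - lx2 p - lx3 p

/-- The persistent subset `ℙ = ℤx₃ ∪ (x₂ + ℤx₃)` of `𝕃(2,3,p)`. -/
def Lpersistent (p : ℕ) : Set (Lgrp p) :=
  {y | ∃ m : ℤ, y = m • lx3 p ∨ y = lx2 p + m • lx3 p}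

/-!
Modulo `ℤx₃` the relations of `𝕃(2,3,p)` become `2x₁ = 3x₂ = 0`, so the quotient is
`ℤ/2 × ℤ/3 ≅ ℤ/6`, with `x₁ ↦ 3`, `x₂ ↦ 2`, `x₃ ↦ 0`. The persistent set is a union of two cosets
of `ℤx₃`, namely the fibres over `0` and `2`, and `ω` maps to `-3 - 2 = 1`; hence `n • ω` lies in
it exactly when `n` is `0` or `2` in `ℤ/6`.
-/

namespace Lgrp

variable (p : ℕ)

theorem three_zsmul_lx2 : (3 : ℤ) • lx2 p = lc p := by
  rw [← sub_eq_zero]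
  exact (QuotientAddGroup.eq_zero_iff _).2 (AddSubgroup.subset_closure (by simp))

theorem two_zsmul_lx1 : (2 : ℤ) • lx1 p = lc p := by
  rw [← three_zsmul_lx2, ← sub_eq_zero]
  exact (QuotientAddGroup.eq_zero_iff _).2 (AddSubgroup.subset_closure (by simp))

variable {p}

theorem exists_eq_zsmul_add (y : Lgrp p) :
    ∃ i j k : ℤ, y = i • lx1 p + j • lx2 p + k • lx3 p := by
  obtain ⟨⟨i, j, k⟩, rfl⟩ := QuotientAddGroup.mk_surjective y
  refine ⟨i, j, k, ?_⟩
  simp only [lx1, lx2, lx3, ← QuotientAddGroup.mk_zsmul, ← QuotientAddGroup.mk_add]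
  simp

section Lift

variable {A : Type*} [AddCommGroup A] {a b c : A}
  (hab : (2 : ℤ) • a = (3 : ℤ) • b) (hbc : (3 : ℤ) • b = (p : ℤ) • c)

/-- The universal property of `𝕃(2,3,p)`: the homomorphism to `A` sending `x₁, x₂, x₃` to
elements `a, b, c` with `2a = 3b = pc`. -/
def lift : Lgrp p →+ A :=
  QuotientAddGroup.lift (Lrel p)
    ((zmultiplesHom A a).coprod ((zmultiplesHom A b).coprod (zmultiplesHom A c))) <| by
      rw [Lrel, AddSubgroup.closure_le]
      rintro _ (rfl | rfl) <;> simp [hab, hbc]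

theorem lift_lx1 : lift hab hbc (lx1 p) = a := by
  simp [lift, lx1]

theorem lift_lx2 : lift hab hbc (lx2 p) = b := by
  simp [lift, lx2]

theorem lift_lx3 : lift hab hbc (lx3 p) = c := by
  simp [lift, lx3]

end Lift

variable (p) in
/-- The reduction `𝕃(2,3,p) → 𝕃(2,3,p)/ℤx₃ ≅ ℤ/6`, normalized so that `ω ↦ 1`. -/
def residue : Lgrp p →+ ZMod 6 :=
  lift (a := 3) (b := 2) (c := 0) (by decide) (by rw [smul_zero]; decide)

theorem residue_lx1 : residue p (lx1 p) = 3 := lift_lx1 _ _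

theorem residue_lx2 : residue p (lx2 p) = 2 := lift_lx2 _ _

theorem residue_lx3 : residue p (lx3 p) = 0 := lift_lx3 _ _

theorem residue_lw : residue p (lw p) = 1 := by
  simp only [lw, lc, map_sub, map_zsmul, residue_lx1, residue_lx2, residue_lx3, smul_zero]
  decide

theorem ker_residue : (residue p).ker = AddSubgroup.zmultiples (lx3 p) := by
  refine le_antisymm (fun y hy ↦ ?_) (by simp [residue_lx3])
  obtain ⟨i, j, k, rfl⟩ := exists_eq_zsmul_add y
  have hij : ((i * 3 + j * 2 : ℤ) : ZMod 6) = 0 := by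
    simpa [residue_lx1, residue_lx2, residue_lx3] using hy
  rw [ZMod.intCast_zmod_eq_zero_iff_dvd] at hij
  obtain ⟨r, rfl⟩ : (2 : ℤ) ∣ i := by omega
  obtain ⟨s, rfl⟩ : (3 : ℤ) ∣ j := by omega
  refine AddSubgroup.mem_zmultiples_iff.2 ⟨(r + s) * p + k, ?_⟩
  calc ((r + s) * p + k) • lx3 p = r • lc p + s • lc p + k • lx3 p := by
        rw [lc]; module
    _ = (2 * r) • lx1 p + (3 * s) • lx2 p + k • lx3 p := by
        rw [mul_comm 2, mul_comm 3, mul_zsmul, mul_zsmul, two_zsmul_lx1, three_zsmul_lx2]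

theorem residue_eq_zero_iff {y : Lgrp p} : residue p y = 0 ↔ ∃ m : ℤ, y = m • lx3 p := by
  rw [← AddMonoidHom.mem_ker, ker_residue, AddSubgroup.mem_zmultiples_iff]
  simp only [eq_comm]

theorem residue_eq_two_iff {y : Lgrp p} :
    residue p y = 2 ↔ ∃ m : ℤ, y = lx2 p + m • lx3 p := by
  rw [← residue_lx2 (p := p), ← sub_eq_zero, ← map_sub, residue_eq_zero_iff]
  simp only [sub_eq_iff_eq_add']

theorem mem_Lpersistent_iff {y : Lgrp p} :
    y ∈ Lpersistent p ↔ residue p y = 0 ∨ residue p y = 2 := by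
  rw [residue_eq_zero_iff, residue_eq_two_iff, ← exists_or]
  rfl

end Lgrp

/-- For every integer `n`, the element `n·ω` of `𝕃(2,3,p)` belongs to the
persistent subset `ℙ = ℤx₃ ∪ (x₂ + ℤx₃)` if and only if `n ≡ 0` or `n ≡ 2 (mod 6)`. -/
theorem stmt_2 (p : ℕ) (hp : 2 ≤ p) (n : ℤ) :
    n • lw p ∈ Lpersistent p ↔ n % 6 = 0 ∨ n % 6 = 2 := by
  have intCast_eq_iff (r : ℤ) : (n : ZMod 6) = r ↔ n % 6 = r % 6 :=
    ZMod.intCast_eq_intCast_iff' n r 6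
  rw [Lgrp.mem_Lpersistent_iff, map_zsmul, Lgrp.residue_lw, zsmul_one]
  exact or_congr (mod_cast intCast_eq_iff 0) (mod_cast intCast_eq_iff 2)
end

section
/- Let p ≥ 2. In 𝕃 = 𝕃(2,3,p) the equality lcm(3,p)·ω = ((p−6)/gcd(3,p))·x₁ holds; note that gcd(3,p) divides p−6, so the coefficient (p−6)/gcd(3,p) is an integer, equal to lcm(3,p)·(p−6)/(3p). -/
/-! The relations give `2x₁ = 3x₂ = px₃ = c`, so any common multiple of `3` and `p` turns `x₂` and
`x₃` into multiples of `c`, hence of `x₁`. For weights `(n, q, r)` and the multiple `lcm(q, r)` the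
resulting coefficient of `x₁` is `nqr(1 - 1/n - 1/q - 1/r) / gcd(q, r)`, whose numerator is `p - 6`
for `(2, 3, p)`. -/

theorem smul_sub_sub_sub_eq_smul {R M : Type*} [Ring R] [AddCommGroup M] [Module R M]
    {n q r k l : R} {x y z c : M} (hx : n • x = c) (hy : q • y = c) (hz : r • z = c)
    (hkl : k * q = l * r) :
    (k * q) • (c - x - y - z) = (k * q * n - k * q - k * n - l * n) • x := by
  have hNy : (k * q) • y = (k * n) • x := by rw [mul_smul, hy, ← hx, mul_smul]
  have hNz : (k * q) • z = (l * n) • x := by rw [hkl, mul_smul, hz, ← hx, mul_smul]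
  rw [smul_sub, smul_sub, smul_sub, hNy, hNz, ← hx, ← mul_smul]
  simp only [sub_smul]

theorem gcd_dvd_weight_numerator (n : ℤ) (q r : ℕ) :
    (Nat.gcd q r : ℤ) ∣ n * q * r - q * r - n * r - n * q := by
  have hq : (Nat.gcd q r : ℤ) ∣ q := Int.natCast_dvd_natCast.mpr (Nat.gcd_dvd_left q r)
  have hr : (Nat.gcd q r : ℤ) ∣ r := Int.natCast_dvd_natCast.mpr (Nat.gcd_dvd_right q r)
  exact (((hr.mul_left _).sub (hr.mul_left _)).sub (hr.mul_left _)).sub (hq.mul_left _)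

theorem lcm_zsmul_sub_sub_sub {A : Type*} [AddCommGroup A] {n : ℤ} {q r : ℕ} (hq : q ≠ 0)
    {x y z c : A} (hx : n • x = c) (hy : (q : ℤ) • y = c) (hz : (r : ℤ) • z = c) :
    (Nat.lcm q r : ℤ) • (c - x - y - z) =
      ((n * q * r - q * r - n * r - n * q) / (Nat.gcd q r : ℤ)) • x := by
  have hg : (Nat.gcd q r : ℤ) ≠ 0 := mod_cast Nat.gcd_ne_zero_left hq
  obtain ⟨k, hk⟩ : (Nat.gcd q r : ℤ) ∣ r := mod_cast Nat.gcd_dvd_right q r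
  obtain ⟨l, hl⟩ : (Nat.gcd q r : ℤ) ∣ q := mod_cast Nat.gcd_dvd_left q r
  have hlcm : (Nat.gcd q r : ℤ) * Nat.lcm q r = q * r := mod_cast Nat.gcd_mul_lcm q r
  have hkq : (Nat.lcm q r : ℤ) = k * q :=
    mul_left_cancel₀ hg (by linear_combination hlcm + q * hk)
  have hkl : k * q = l * r := by linear_combination k * hl - l * hk
  have hcoeff : (n * q * r - q * r - n * r - n * q) / (Nat.gcd q r : ℤ) =
      k * q * n - k * q - k * n - l * n :=
    Int.ediv_eq_of_eq_mul_right hg (by linear_combination (n * q - q - n) * hk - n * hl)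
  rw [hkq, hcoeff, smul_sub_sub_sub_eq_smul hx hy hz hkl]

theorem ediv_gcd_eq_lcm_mul_ediv {a b : ℕ} (ha : a ≠ 0) (hb : b ≠ 0) (m : ℤ) :
    m / (Nat.gcd a b : ℤ) = (Nat.lcm a b : ℤ) * m / (a * b) := by
  have hlcm : (0 : ℤ) < Nat.lcm a b := mod_cast Nat.lcm_pos ha.bot_lt hb.bot_lt
  have hprod : (a * b : ℤ) = Nat.lcm a b * Nat.gcd a b := mod_cast (Nat.lcm_mul_gcd a b).symm
  rw [hprod, Int.mul_ediv_mul_of_pos _ _ hlcm]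

theorem three_zsmul_lx2 (p : ℕ) : (3 : ℤ) • lx2 p = lc p := by
  rw [lc, lx2, lx3, ← QuotientAddGroup.mk_zsmul, ← QuotientAddGroup.mk_zsmul, eq_comm,
    QuotientAddGroup.eq]
  exact AddSubgroup.subset_closure (by simp)

theorem two_zsmul_lx1 (p : ℕ) : (2 : ℤ) • lx1 p = lc p := by
  rw [← three_zsmul_lx2, lx1, lx2, ← QuotientAddGroup.mk_zsmul, ← QuotientAddGroup.mk_zsmul,
    eq_comm, QuotientAddGroup.eq]
  exact AddSubgroup.subset_closure (by simp)

/-- In `𝕃(2,3,p)` the equality `lcm(3,p)·ω = ((p−6)/gcd(3,p))·x₁` holds; moreover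
`gcd(3,p)` divides `p−6`, so the coefficient is an integer, equal to
`lcm(3,p)·(p−6)/(3p)`. -/
theorem stmt_4 (p : ℕ) (hp : 2 ≤ p) :
    ((Nat.gcd 3 p : ℤ) ∣ (p : ℤ) - 6) ∧
    (Nat.lcm 3 p : ℤ) • lw p = (((p : ℤ) - 6) / (Nat.gcd 3 p : ℤ)) • lx1 p ∧
    ((p : ℤ) - 6) / (Nat.gcd 3 p : ℤ) =
      (Nat.lcm 3 p : ℤ) * ((p : ℤ) - 6) / (3 * (p : ℤ)) := by
  have hnum : (p : ℤ) - 6 = 2 * (3 : ℕ) * p - (3 : ℕ) * p - 2 * p - 2 * (3 : ℕ) := by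
    push_cast
    ring
  refine ⟨?_, ?_, ?_⟩
  · exact hnum ▸ gcd_dvd_weight_numerator 2 3 p
  · rw [hnum]
    exact lcm_zsmul_sub_sub_sub three_ne_zero (two_zsmul_lx1 p) (three_zsmul_lx2 p) rfl
  · exact ediv_gcd_eq_lcm_mul_ediv three_ne_zero (by lia) _
end

section
/- Let p₁, p₂, p₃ ≥ 2. Every element x of the group 𝕃 = 𝕃(p₁,p₂,p₃) can be written in normal form x = n₁x₁ + n₂x₂ + n₃x₃ + mc with integers n₁, n₂, n₃, m satisfying 0 ≤ nᵢ < pᵢ for i = 1,2,3, and this representation is unique. -/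
/-- The relations subgroup of `ℤ³` defining `𝕃(p₁,p₂,p₃)`: generated by
`(p₁,−p₂,0)` and `(0,p₂,−p₃)`. -/
def Lrel3 (p₁ p₂ p₃ : ℕ) : AddSubgroup (ℤ × ℤ × ℤ) :=
  AddSubgroup.closure {((p₁ : ℤ), -(p₂ : ℤ), 0), (0, (p₂ : ℤ), -(p₃ : ℤ))}

/-- The abelian group `𝕃(p₁,p₂,p₃)` with generators `x₁, x₂, x₃` and relations
`p₁x₁ = p₂x₂ = p₃x₃`. -/
abbrev Lgrp3 (p₁ p₂ p₃ : ℕ) := (ℤ × ℤ × ℤ) ⧸ Lrel3 p₁ p₂ p₃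

/-- The generator `x₁` of `𝕃(p₁,p₂,p₃)`. -/
def ly1 (p₁ p₂ p₃ : ℕ) : Lgrp3 p₁ p₂ p₃ := QuotientAddGroup.mk (1, 0, 0)

/-- The generator `x₂` of `𝕃(p₁,p₂,p₃)`. -/
def ly2 (p₁ p₂ p₃ : ℕ) : Lgrp3 p₁ p₂ p₃ := QuotientAddGroup.mk (0, 1, 0)

/-- The generator `x₃` of `𝕃(p₁,p₂,p₃)`. -/
def ly3 (p₁ p₂ p₃ : ℕ) : Lgrp3 p₁ p₂ p₃ := QuotientAddGroup.mk (0, 0, 1)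

/-- The canonical element `c = p₃ x₃` of `𝕃(p₁,p₂,p₃)`. -/
def lcc (p₁ p₂ p₃ : ℕ) : Lgrp3 p₁ p₂ p₃ := (p₃ : ℤ) • ly3 p₁ p₂ p₃

/-!
The relations subgroup consists of the triples `(p₁k₁, p₂k₂, p₃k₃)` with `k₁ + k₂ + k₃ = 0`.
Hence `n₁x₁ + n₂x₂ + n₃x₃ + mc` is the class of `(a₁, a₂, a₃)` exactly when `aᵢ = nᵢ + pᵢkᵢ` for
some integers `kᵢ` with sum `m`. If moreover `0 ≤ nᵢ < pᵢ`, then `nᵢ` and `kᵢ` are the remainder and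
the quotient in the division of `aᵢ` by `pᵢ`.
-/

section NormalForm

variable {p₁ p₂ p₃ : ℕ}

theorem mem_Lrel3_iff {a₁ a₂ a₃ : ℤ} :
    (a₁, a₂, a₃) ∈ Lrel3 p₁ p₂ p₃ ↔
      ∃ k₁ k₂ k₃ : ℤ, k₁ + k₂ + k₃ = 0 ∧ a₁ = p₁ * k₁ ∧ a₂ = p₂ * k₂ ∧ a₃ = p₃ * k₃ := by
  simp only [Lrel3, AddSubgroup.mem_closure_pair, Prod.smul_mk, Prod.mk_add_mk, Prod.mk.injEq,
    smul_eq_mul]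
  constructor
  · rintro ⟨u, v, rfl, rfl, rfl⟩
    exact ⟨u, v - u, -v, by ring, by ring, by ring, by ring⟩
  · rintro ⟨k₁, k₂, k₃, hk, rfl, rfl, rfl⟩
    obtain rfl : k₂ = -k₃ - k₁ := by linarith
    exact ⟨k₁, -k₃, by ring, by ring, by ring⟩

theorem zsmul_generators_add_zsmul_lcc (n₁ n₂ n₃ m : ℤ) :
    n₁ • ly1 p₁ p₂ p₃ + n₂ • ly2 p₁ p₂ p₃ + n₃ • ly3 p₁ p₂ p₃ + m • lcc p₁ p₂ p₃ =
      QuotientAddGroup.mk (n₁, n₂, n₃ + m * p₃) := by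
  simp only [lcc, ly1, ly2, ly3, ← QuotientAddGroup.mk_zsmul, ← QuotientAddGroup.mk_add]
  simp

theorem mk_eq_zsmul_generators_add_zsmul_lcc_iff {a₁ a₂ a₃ n₁ n₂ n₃ m : ℤ} :
    QuotientAddGroup.mk (a₁, a₂, a₃) =
        n₁ • ly1 p₁ p₂ p₃ + n₂ • ly2 p₁ p₂ p₃ + n₃ • ly3 p₁ p₂ p₃ + m • lcc p₁ p₂ p₃ ↔
      ∃ k₁ k₂ k₃ : ℤ, k₁ + k₂ + k₃ = m ∧
        n₁ + p₁ * k₁ = a₁ ∧ n₂ + p₂ * k₂ = a₂ ∧ n₃ + p₃ * k₃ = a₃ := by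
  rw [zsmul_generators_add_zsmul_lcc, eq_comm, QuotientAddGroup.eq, Prod.neg_mk, Prod.neg_mk,
    Prod.mk_add_mk, Prod.mk_add_mk, mem_Lrel3_iff]
  constructor
  · rintro ⟨k₁, k₂, k₃, hk, h₁, h₂, h₃⟩
    exact ⟨k₁, k₂, m + k₃, by linarith, by linarith, by linarith, by linarith⟩
  · rintro ⟨k₁, k₂, k₃, rfl, rfl, rfl, rfl⟩
    exact ⟨k₁, k₂, -k₁ - k₂, by ring, by ring, by ring, by ring⟩

theorem mk_eq_normalForm_iff (h₁ : 0 < p₁) (h₂ : 0 < p₂) (h₃ : 0 < p₃)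
    {a₁ a₂ a₃ n₁ n₂ n₃ m : ℤ} :
    ((0 ≤ n₁ ∧ n₁ < p₁) ∧ (0 ≤ n₂ ∧ n₂ < p₂) ∧ (0 ≤ n₃ ∧ n₃ < p₃) ∧
      QuotientAddGroup.mk (a₁, a₂, a₃) =
        n₁ • ly1 p₁ p₂ p₃ + n₂ • ly2 p₁ p₂ p₃ + n₃ • ly3 p₁ p₂ p₃ + m • lcc p₁ p₂ p₃) ↔
      (n₁, n₂, n₃, m) = (a₁ % p₁, a₂ % p₂, a₃ % p₃, a₁ / p₁ + a₂ / p₂ + a₃ / p₃) := by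
  have division {p : ℕ} (hp : 0 < p) {a k n : ℤ} :
      a / p = k ∧ a % p = n ↔ n + p * k = a ∧ 0 ≤ n ∧ n < p :=
    Int.ediv_emod_unique (Int.natCast_pos.mpr hp)
  simp only [mk_eq_zsmul_generators_add_zsmul_lcc_iff, Prod.mk.injEq]
  constructor
  · rintro ⟨hn₁, hn₂, hn₃, k₁, k₂, k₃, rfl, ha₁, ha₂, ha₃⟩
    obtain ⟨rfl, rfl⟩ := (division h₁).mpr ⟨ha₁, hn₁⟩
    obtain ⟨rfl, rfl⟩ := (division h₂).mpr ⟨ha₂, hn₂⟩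
    obtain ⟨rfl, rfl⟩ := (division h₃).mpr ⟨ha₃, hn₃⟩
    exact ⟨rfl, rfl, rfl, rfl⟩
  · rintro ⟨rfl, rfl, rfl, rfl⟩
    obtain ⟨ha₁, hn₁⟩ := (division h₁).mp ⟨rfl, rfl⟩
    obtain ⟨ha₂, hn₂⟩ := (division h₂).mp ⟨rfl, rfl⟩
    obtain ⟨ha₃, hn₃⟩ := (division h₃).mp ⟨rfl, rfl⟩
    exact ⟨hn₁, hn₂, hn₃, _, _, _, rfl, ha₁, ha₂, ha₃⟩

end NormalForm

/-- Every element `x` of `𝕃(p₁,p₂,p₃)` has a unique normal form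
`x = n₁x₁ + n₂x₂ + n₃x₃ + mc` with `0 ≤ nᵢ < pᵢ`. -/
theorem stmt_7 (p₁ p₂ p₃ : ℕ) (h₁ : 2 ≤ p₁) (h₂ : 2 ≤ p₂) (h₃ : 2 ≤ p₃)
    (x : Lgrp3 p₁ p₂ p₃) :
    ∃! t : ℤ × ℤ × ℤ × ℤ,
      (0 ≤ t.1 ∧ t.1 < (p₁ : ℤ)) ∧
      (0 ≤ t.2.1 ∧ t.2.1 < (p₂ : ℤ)) ∧
      (0 ≤ t.2.2.1 ∧ t.2.2.1 < (p₃ : ℤ)) ∧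
      x = t.1 • ly1 p₁ p₂ p₃ + t.2.1 • ly2 p₁ p₂ p₃ + t.2.2.1 • ly3 p₁ p₂ p₃ +
            t.2.2.2 • lcc p₁ p₂ p₃ := by
  obtain ⟨⟨a₁, a₂, a₃⟩, rfl⟩ := QuotientAddGroup.mk_surjective x
  have hp₁ : 0 < p₁ := by lia
  have hp₂ : 0 < p₂ := by lia
  have hp₃ : 0 < p₃ := by lia
  exact ⟨_, (mk_eq_normalForm_iff hp₁ hp₂ hp₃).mpr rfl,
    fun _ ht => (mk_eq_normalForm_iff hp₁ hp₂ hp₃).mp ht⟩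
end

section
/- Let p ≥ 3 and let δ : 𝕃(2,3,p) → ℤ be the degree homomorphism. Every coset of ℤx₃ in 𝕃 contains exactly one element x with 0 ≤ δ(x) < δ(x₃); consequently the set {x ∈ 𝕃 : 0 ≤ δ(x) < δ(x₃)} has exactly 6 elements. -/
/-!
A homomorphism to an archimedean ordered group that is positive on `g` moves by equal
positive steps along each coset of `ℤg`, so the preimage of a half-open window of length one step
meets every coset exactly once and has as many elements as the index of `ℤg`. In `𝕃(2,3,p)`, killing
`x₃` kills `2x₁ = 3x₂ = p x₃`, and what remains is `ℤ/2 × ℤ/3`; hence `ℤx₃` has index `6`.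
-/

open AddSubgroup
open Set (Ico mem_Ico)

section Window

variable {G M : Type*} [AddGroup G] [AddCommGroup M] [LinearOrder M] [IsOrderedAddMonoid M]
  [Archimedean M] (f : G →+ M) {g : G}

theorem existsUnique_neg_add_mem_zmultiples_mem_Ico (hg : 0 < f g) (a : M) (y : G) :
    ∃! x : G, -y + x ∈ zmultiples g ∧ f x ∈ Ico a (a + f g) := by
  obtain ⟨m, hm, m_unique⟩ := existsUnique_add_zsmul_mem_Ico hg (f y) a
  refine ⟨y + m • g, ⟨by simp, by simpa using hm⟩, ?_⟩
  rintro x ⟨⟨n, hn⟩, hx⟩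
  obtain rfl : x = y + n • g := eq_add_of_neg_add_eq hn.symm
  rw [m_unique n (by simpa using hx)]

theorem isComplement_preimage_Ico_zmultiples (hg : 0 < f g) (a : M) :
    IsComplement (f ⁻¹' Ico a (a + f g)) (zmultiples g : Set G) := by
  rw [isComplement_iff_existsUnique_neg_add_mem]
  intro y
  obtain ⟨x, ⟨hxy, hx⟩, x_unique⟩ := existsUnique_neg_add_mem_zmultiples_mem_Ico f hg a y
  have neg_add_mem_comm (z : G) : -z + y ∈ zmultiples g ↔ -y + z ∈ zmultiples g := by
    rw [← neg_mem_iff, neg_add_rev, neg_neg]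
  exact ⟨⟨x, hx⟩, (neg_add_mem_comm x).2 hxy,
    fun z hz ↦ Subtype.ext (x_unique z ⟨(neg_add_mem_comm z).1 hz, z.2⟩)⟩

theorem ncard_preimage_Ico_eq_index_zmultiples (hg : 0 < f g) (a : M) :
    (f ⁻¹' Ico a (a + f g)).ncard = (zmultiples g).index :=
  (isComplement_preimage_Ico_zmultiples f hg a).ncard_left

end Window

theorem lcm_div_right_pos {m n : ℕ} (hm : 0 < m) (hn : 0 < n) : 0 < m.lcm n / n :=
  Nat.div_pos (Nat.le_of_dvd (Nat.lcm_pos hm hn) (Nat.dvd_lcm_right m n)) hn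

theorem mk_mem_zmultiples_lx3_iff (p : ℕ) (a b c : ℤ) :
    QuotientAddGroup.mk' (Lrel p) (a, b, c) ∈ zmultiples (lx3 p) ↔ 2 ∣ a ∧ 3 ∣ b := by
  have mem_iff : QuotientAddGroup.mk' (Lrel p) (a, b, c) ∈ zmultiples (lx3 p) ↔
      ∃ m k l : ℤ, k • (2, -3, 0) + l • (0, 3, -(p : ℤ)) = -(m • (0, 0, 1)) + (a, b, c) := by
    simp only [mem_zmultiples_iff, lx3, QuotientAddGroup.mk'_apply, ← QuotientAddGroup.mk_zsmul,
      QuotientAddGroup.eq]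
    simp only [Lrel, mem_closure_pair]
  rw [mem_iff]
  simp only [Prod.smul_mk, Prod.mk_add_mk, Prod.neg_mk, Prod.mk.injEq, smul_eq_mul]
  constructor
  · rintro ⟨m, k, l, ha, hb, -⟩
    exact ⟨⟨k, by linarith⟩, ⟨l - k, by linarith⟩⟩
  · rintro ⟨⟨k, rfl⟩, ⟨l, rfl⟩⟩
    exact ⟨c + (k + l) * p, k, k + l, by ring, by ring, by ring⟩

theorem comap_mk_zmultiples_lx3 (p : ℕ) :
    (zmultiples (lx3 p)).comap (QuotientAddGroup.mk' (Lrel p)) =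
      (zmultiples (2 : ℤ)).prod ((zmultiples (3 : ℤ)).prod (⊤ : AddSubgroup ℤ)) := by
  ext ⟨a, b, c⟩
  simp only [mem_comap, mk_mem_zmultiples_lx3_iff, mem_prod, Int.mem_zmultiples_iff, mem_top,
    and_true]

theorem index_zmultiples_lx3 (p : ℕ) : (zmultiples (lx3 p)).index = 6 := by
  rw [← index_comap_of_surjective _ (QuotientAddGroup.mk'_surjective (Lrel p)),
    comap_mk_zmultiples_lx3, index_prod, index_prod, Int.index_zmultiples, Int.index_zmultiples,
    index_top]
  rfl

theorem stmt_10_general {M : Type*} [AddCommGroup M] [LinearOrder M] [IsOrderedAddMonoid M]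
    [Archimedean M] (p : ℕ) (δ : Lgrp p →+ M) (hδ : 0 < δ (lx3 p)) :
    (∀ y : Lgrp p, ∃! x : Lgrp p,
      x - y ∈ zmultiples (lx3 p) ∧ 0 ≤ δ x ∧ δ x < δ (lx3 p)) ∧
    {x : Lgrp p | 0 ≤ δ x ∧ δ x < δ (lx3 p)}.ncard = 6 := by
  constructor
  · intro y
    simpa only [neg_add_eq_sub, zero_add, mem_Ico] using
      existsUnique_neg_add_mem_zmultiples_mem_Ico δ hδ 0 y
  · simpa only [zero_add, Set.preimage, mem_Ico, index_zmultiples_lx3] using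
      ncard_preimage_Ico_eq_index_zmultiples δ hδ 0

/-- For `p ≥ 3`, every coset of `ℤx₃` in `𝕃(2,3,p)` contains exactly one element
`x` with `0 ≤ δ(x) < δ(x₃)`; consequently `{x : 0 ≤ δ(x) < δ(x₃)}` has exactly
`6` elements. -/
theorem stmt_10 (p : ℕ) (hp : 3 ≤ p) (δ : Lgrp p →+ ℤ)
    (h1 : δ (lx1 p) = (Nat.lcm 6 p / 2 : ℕ))
    (h2 : δ (lx2 p) = (Nat.lcm 6 p / 3 : ℕ))
    (h3 : δ (lx3 p) = (Nat.lcm 6 p / p : ℕ)) :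
    (∀ y : Lgrp p, ∃! x : Lgrp p,
      x - y ∈ AddSubgroup.zmultiples (lx3 p) ∧ 0 ≤ δ x ∧ δ x < δ (lx3 p)) ∧
    {x : Lgrp p | 0 ≤ δ x ∧ δ x < δ (lx3 p)}.ncard = 6 := by
  exact stmt_10_general p δ (by rw [h3]; exact_mod_cast lcm_div_right_pos (by norm_num) (by omega))
end

section
/- Let p ≥ 2. Every y ∈ 𝕃(2,3,p) with 0 ≤ y ≤ x₂ + (p−1)x₃ (i.e., both y and x₂ + (p−1)x₃ − y lie in the positive cone) is of the form y = a·x₂ + b·x₃ with a ∈ {0,1} and b ∈ {0,1,…,p−1}; in particular every such y belongs to ℙ = ℤx₃ ∪ (x₂ + ℤx₃). -/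
/-!
Every element of `𝕃(2,3,p)` has at most one representative `l₁x₁ + l₂x₂ + l₃x₃` with `0 ≤ l₁ < 2`,
`0 ≤ l₂ < 3`, `0 ≤ l₃ < p`, and if it has one, then that is also its only representative with
nonnegative coefficients: a relation `m(2,-3,0) + n(0,3,-p)` added to `(l₁,l₂,l₃)` keeps all three
coordinates nonnegative only if `0 ≤ m ≤ n ≤ 0`. For `0 ≤ y ≤ l₁x₁ + l₂x₂ + l₃x₃`, the sum of
nonnegative representatives of `y` and of the difference is therefore `(l₁,l₂,l₃)` itself, so `y`
has coefficients at most `l₁, l₂, l₃`. The theorem is the case `(0,1,p-1)`.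
-/

theorem mem_Lrel_iff {p : ℕ} {v : ℤ × ℤ × ℤ} :
    v ∈ Lrel p ↔ ∃ m n : ℤ, v = (2 * m, 3 * (n - m), -(p * n)) := by
  rw [Lrel, AddSubgroup.mem_closure_pair]
  refine exists₂_congr fun m n ↦ ?_
  have h : m • ((2, -3, 0) : ℤ × ℤ × ℤ) + n • (0, 3, -(p : ℤ)) =
      (2 * m, 3 * (n - m), -(p * n)) := by
    ext <;> simp <;> ring
  rw [h, eq_comm]

namespace Lgrp

variable {p : ℕ}

theorem mk_natCast (a₁ a₂ a₃ : ℕ) :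
    QuotientAddGroup.mk ((a₁ : ℤ), (a₂ : ℤ), (a₃ : ℤ)) =
      a₁ • lx1 p + a₂ • lx2 p + a₃ • lx3 p := by
  simp only [lx1, lx2, lx3, ← QuotientAddGroup.mk_nsmul, ← QuotientAddGroup.mk_add]
  simp

theorem coeff_unique_of_lt {a₁ a₂ a₃ l₁ l₂ l₃ : ℕ} (h₁ : l₁ < 2) (h₂ : l₂ < 3) (h₃ : l₃ < p)
    (h : l₁ • lx1 p + l₂ • lx2 p + l₃ • lx3 p = a₁ • lx1 p + a₂ • lx2 p + a₃ • lx3 p) :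
    a₁ = l₁ ∧ a₂ = l₂ ∧ a₃ = l₃ := by
  rw [← mk_natCast, ← mk_natCast, QuotientAddGroup.eq, mem_Lrel_iff] at h
  obtain ⟨m, n, hmn⟩ := h
  simp only [Prod.neg_mk, Prod.mk_add_mk, Prod.mk.injEq] at hmn
  obtain ⟨e₁, e₂, e₃⟩ := hmn
  have hm : 0 ≤ m := by omega
  have hle : m ≤ n := by omega
  have hn : n < 1 := by
    refine lt_of_mul_lt_mul_left (a := (p : ℤ)) ?_ p.cast_nonneg
    omega
  obtain rfl : m = 0 := by omega
  obtain rfl : n = 0 := by omega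
  omega

theorem exists_coeff_le_of_nonneg_of_le {l₁ l₂ l₃ : ℕ} (h₁ : l₁ < 2) (h₂ : l₂ < 3) (h₃ : l₃ < p)
    {y : Lgrp p} (hy : ∃ a₁ a₂ a₃ : ℕ, y = a₁ • lx1 p + a₂ • lx2 p + a₃ • lx3 p)
    (hy' : ∃ b₁ b₂ b₃ : ℕ, l₁ • lx1 p + l₂ • lx2 p + l₃ • lx3 p - y =
      b₁ • lx1 p + b₂ • lx2 p + b₃ • lx3 p) :
    ∃ a₁ ≤ l₁, ∃ a₂ ≤ l₂, ∃ a₃ ≤ l₃, y = a₁ • lx1 p + a₂ • lx2 p + a₃ • lx3 p := by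
  obtain ⟨a₁, a₂, a₃, hy⟩ := hy
  obtain ⟨b₁, b₂, b₃, hb⟩ := hy'
  have hsum : l₁ • lx1 p + l₂ • lx2 p + l₃ • lx3 p =
      (b₁ + a₁) • lx1 p + (b₂ + a₂) • lx2 p + (b₃ + a₃) • lx3 p := by
    rw [sub_eq_iff_eq_add.mp hb, hy]
    module
  obtain ⟨e₁, e₂, e₃⟩ := coeff_unique_of_lt h₁ h₂ h₃ hsum
  exact ⟨a₁, by omega, a₂, by omega, a₃, by omega, hy⟩

end Lgrp

theorem smul_lx2_add_smul_lx3_mem_Lpersistent {p a : ℕ} (ha : a = 0 ∨ a = 1) (b : ℕ) :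
    a • lx2 p + b • lx3 p ∈ Lpersistent p := by
  refine ⟨b, ?_⟩
  rcases ha with rfl | rfl
  · exact Or.inl (by simp)
  · exact Or.inr (by simp)

/-- Every `y ∈ 𝕃(2,3,p)` with `0 ≤ y ≤ x₂ + (p−1)x₃` (both `y` and
`x₂ + (p−1)x₃ − y` lie in the positive cone) has the form `y = a·x₂ + b·x₃`
with `a ∈ {0,1}` and `0 ≤ b ≤ p−1`; in particular every such `y` belongs to
`ℙ = ℤx₃ ∪ (x₂ + ℤx₃)`. -/
theorem stmt_14 (p : ℕ) (hp : 2 ≤ p) (y : Lgrp p)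
    (hy : ∃ a₁ a₂ a₃ : ℕ, y = a₁ • lx1 p + a₂ • lx2 p + a₃ • lx3 p)
    (hy' : ∃ a₁ a₂ a₃ : ℕ,
      lx2 p + (p - 1) • lx3 p - y = a₁ • lx1 p + a₂ • lx2 p + a₃ • lx3 p) :
    (∃ a b : ℕ, (a = 0 ∨ a = 1) ∧ b ≤ p - 1 ∧ y = a • lx2 p + b • lx3 p) ∧
    y ∈ Lpersistent p := by
  obtain ⟨a₁, ha₁, a, ha, b, hb, rfl⟩ :=
    Lgrp.exists_coeff_le_of_nonneg_of_le (l₁ := 0) (l₂ := 1) (l₃ := p - 1)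
      (by omega) (by omega) (by omega) hy (by simpa using hy')
  obtain rfl : a₁ = 0 := by omega
  have ha01 : a = 0 ∨ a = 1 := by omega
  rw [zero_smul, zero_add]
  exact ⟨⟨a, b, ha01, hb, rfl⟩, smul_lx2_add_smul_lx3_mem_Lpersistent ha01 b⟩
end

section
/- Let p ≥ 2. The only triples (a,b,e) of nonnegative integers satisfying a·x₁ + b·x₂ + e·x₃ = c in 𝕃(2,3,p) are (2,0,0), (0,3,0) and (0,0,p). (Equivalently, the monomials of degree c in the 𝕃-graded polynomial ring k[X₁,X₂,X₃] with deg Xᵢ = xᵢ are exactly X₁², X₂³ and X₃^p.) -/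
/-!
In the group `𝕃(p,q,r)` with relations `p x₁ = q x₂ = r x₃ = c`, an integer combination
`a x₁ + b x₂ + e x₃` equals `n c` exactly when `(a, b, e) = (p k, q l, r m)` with `k + l + m = n`.
If `a, b, e ≥ 0` and the weights are positive, then `k, l, m ≥ 0`; for `n = 1` exactly one of them
is `1` and the other two vanish.
-/

/-- The Geigle–Lenzing grading group `𝕃(p,q,r)` of a weight triple, generalizing `𝕃(2,3,p)`.
The relations `p x₁ = q x₂ = r x₃` are encoded by the same two generators of the relation subgroup
as in `Lrel`, so that `GeigleLenzingGroup 2 3 p` and `Lgrp p` are definitionally equal. -/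
abbrev GeigleLenzingGroup (p q r : ℕ) :=
  (ℤ × ℤ × ℤ) ⧸ AddSubgroup.closure {((p : ℤ), -(q : ℤ), (0 : ℤ)), (0, (q : ℤ), -(r : ℤ))}

namespace GeigleLenzingGroup

variable (p q r : ℕ)

/-- The generator `x₁` of `𝕃(p,q,r)`. -/
def x₁ : GeigleLenzingGroup p q r := QuotientAddGroup.mk (1, 0, 0)

/-- The generator `x₂` of `𝕃(p,q,r)`. -/
def x₂ : GeigleLenzingGroup p q r := QuotientAddGroup.mk (0, 1, 0)

/-- The generator `x₃` of `𝕃(p,q,r)`. -/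
def x₃ : GeigleLenzingGroup p q r := QuotientAddGroup.mk (0, 0, 1)

/-- The canonical element `c = p x₁ = q x₂ = r x₃` of `𝕃(p,q,r)`, encoded as `r x₃`. -/
def c : GeigleLenzingGroup p q r := (r : ℤ) • x₃ p q r

variable {p q r}

theorem mk_eq_zero_iff {a b e : ℤ} :
    ((a, b, e) : GeigleLenzingGroup p q r) = 0 ↔
      ∃ k l m : ℤ, k + l + m = 0 ∧ a = p * k ∧ b = q * l ∧ e = r * m := by
  simp only [QuotientAddGroup.eq_zero_iff, AddSubgroup.mem_closure_pair, Prod.smul_mk,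
    Prod.mk_add_mk, Prod.mk.injEq, smul_eq_mul]
  constructor
  · rintro ⟨s, t, rfl, rfl, rfl⟩
    exact ⟨s, t - s, -t, by ring, by ring, by ring, by ring⟩
  · rintro ⟨k, l, m, hsum, rfl, rfl, rfl⟩
    obtain rfl : l = -m - k := by linarith
    exact ⟨k, -m, by ring, by ring, by ring⟩

theorem zsmul_x₁_add_zsmul_x₂_add_zsmul_x₃ (a b e : ℤ) :
    a • x₁ p q r + b • x₂ p q r + e • x₃ p q r = ((a, b, e) : GeigleLenzingGroup p q r) := by
  simp only [x₁, x₂, x₃, ← QuotientAddGroup.mk_zsmul, ← QuotientAddGroup.mk_add]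
  simp

theorem zsmul_add_zsmul_add_zsmul_eq_zsmul_c_iff {a b e n : ℤ} :
    a • x₁ p q r + b • x₂ p q r + e • x₃ p q r = n • c p q r ↔
      ∃ k l m : ℤ, k + l + m = n ∧ a = p * k ∧ b = q * l ∧ e = r * m := by
  rw [c, smul_smul, ← sub_eq_zero, add_sub_assoc, ← sub_smul,
    zsmul_x₁_add_zsmul_x₂_add_zsmul_x₃, mk_eq_zero_iff]
  constructor
  · rintro ⟨k, l, m, hsum, ha, hb, he⟩
    exact ⟨k, l, m + n, by linarith, ha, hb, by linarith⟩
  · rintro ⟨k, l, m, hsum, ha, hb, he⟩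
    exact ⟨k, l, m - n, by linarith, ha, hb, by linarith⟩

theorem nsmul_add_nsmul_add_nsmul_eq_nsmul_c_iff (hp : 0 < p) (hq : 0 < q) (hr : 0 < r)
    {a b e n : ℕ} :
    a • x₁ p q r + b • x₂ p q r + e • x₃ p q r = n • c p q r ↔
      ∃ k l m : ℕ, k + l + m = n ∧ a = p * k ∧ b = q * l ∧ e = r * m := by
  simp only [← natCast_zsmul, zsmul_add_zsmul_add_zsmul_eq_zsmul_c_iff]
  have nonneg_of_eq_mul {w x : ℕ} {k : ℤ} (hw : 0 < w) (h : (x : ℤ) = w * k) : 0 ≤ k :=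
    nonneg_of_mul_nonneg_right (h ▸ x.cast_nonneg) (by exact_mod_cast hw)
  constructor
  · rintro ⟨k, l, m, hsum, ha, hb, he⟩
    lift k to ℕ using nonneg_of_eq_mul hp ha
    lift l to ℕ using nonneg_of_eq_mul hq hb
    lift m to ℕ using nonneg_of_eq_mul hr he
    exact ⟨k, l, m, by exact_mod_cast hsum, by exact_mod_cast ha, by exact_mod_cast hb,
      by exact_mod_cast he⟩
  · rintro ⟨k, l, m, rfl, rfl, rfl, rfl⟩
    exact ⟨k, l, m, by simp⟩

end GeigleLenzingGroup

open GeigleLenzingGroup in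
theorem stmt_16_general (p q r : ℕ) (hp : 0 < p) (hq : 0 < q) (hr : 0 < r) (a b e : ℕ) :
    a • x₁ p q r + b • x₂ p q r + e • x₃ p q r = c p q r ↔
      (a = p ∧ b = 0 ∧ e = 0) ∨ (a = 0 ∧ b = q ∧ e = 0) ∨ (a = 0 ∧ b = 0 ∧ e = r) := by
  rw [← one_nsmul (c p q r), nsmul_add_nsmul_add_nsmul_eq_nsmul_c_iff hp hq hr]
  constructor
  · rintro ⟨k, l, m, hsum, rfl, rfl, rfl⟩
    obtain ⟨rfl, rfl, rfl⟩ | ⟨rfl, rfl, rfl⟩ | ⟨rfl, rfl, rfl⟩ :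
        (k = 1 ∧ l = 0 ∧ m = 0) ∨ (k = 0 ∧ l = 1 ∧ m = 0) ∨ (k = 0 ∧ l = 0 ∧ m = 1) := by
      omega
    all_goals simp
  · rintro (⟨rfl, rfl, rfl⟩ | ⟨rfl, rfl, rfl⟩ | ⟨rfl, rfl, rfl⟩)
    · exact ⟨1, 0, 0, by simp⟩
    · exact ⟨0, 1, 0, by simp⟩
    · exact ⟨0, 0, 1, by simp⟩

/-- The only triples `(a,b,e)` of nonnegative integers with
`a·x₁ + b·x₂ + e·x₃ = c` in `𝕃(2,3,p)` are `(2,0,0)`, `(0,3,0)` and `(0,0,p)`. -/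
theorem stmt_16 (p : ℕ) (hp : 2 ≤ p) (a b e : ℕ) :
    a • lx1 p + b • lx2 p + e • lx3 p = lc p ↔
      (a = 2 ∧ b = 0 ∧ e = 0) ∨ (a = 0 ∧ b = 3 ∧ e = 0) ∨ (a = 0 ∧ b = 0 ∧ e = p) :=
  stmt_16_general 2 3 p two_pos three_pos (by omega) a b e
end
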